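/- arXiv:math/0409510 — 5 statements merged into one kernel-verified Lean document; each statement's English description precedes it below -/
import Mathlib

section
/- Let p be a natural number, let r and s be positive integers, and let S_1, …, S_s be nonempty, pairwise disjoint subsets of {1, …, r} whose union is all of {1, …, r}. For each j, let w_j ∈ (ℤ/pℤ)^r be the indicator vector of S_j (equal to 1 in the coordinates belonging to S_j and 0 elsewhere). Let W be the additive subgroup of (ℤ/pℤ)^r generated by w_1, …, w_s, and let G′ be an additive subgroup of (ℤ/pℤ)^r with W ⊊ G′. Then there exists e = (e_1, …, e_r) ∈ G′ with e ∉ W such that: (1) e_i = 0 for at least one index i, and (2) for every j ∈ {1, …, s} there exists i ∈ S_j with e_i ≠ 0. -/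
/-!
`W` is the group of functions that are constant on each block, so an element `v` of `G' \ W` stays
in `G' \ W` when such a function is subtracted, and takes two distinct values on some block.
Subtracting one of these values on that block leaves both a zero and a nonzero entry there; on every
other block, subtracting any constant different from some value of `v` there leaves a nonzero entry.
-/

section Blocks

variable {ι κ A : Type*} {S : κ → Set ι}

/-- The group of functions that are constant on each block `S j`. Over `ℤ/pℤ`, for a partition into
finitely many blocks, this is the group `W` generated by the indicator vectors of the blocks. -/
def blockConstant (S : κ → Set ι) (A : Type*) [AddGroup A] : AddSubgroup (ι → A) where
  carrier := {v | ∀ j, ∀ a ∈ S j, ∀ b ∈ S j, v a = v b}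
  zero_mem' _ _ _ _ _ := rfl
  add_mem' hu hv j a ha b hb := congrArg₂ (· + ·) (hu j a ha b hb) (hv j a ha b hb)
  neg_mem' hv j a ha b hb := congrArg Neg.neg (hv j a ha b hb)

/-- A family of nonempty, pairwise disjoint finsets covering `ι`, as an indexed partition of `ι`
into sets. -/
noncomputable def indexedPartitionOfFinsets [Fintype ι] [Fintype κ] [DecidableEq ι]
    {S : κ → Finset ι} (hne : ∀ j, (S j).Nonempty) (hdisj : ∀ j j', j ≠ j' → Disjoint (S j) (S j'))
    (hunion : Finset.univ.biUnion S = Finset.univ) :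
    IndexedPartition fun j => (S j : Set ι) :=
  .mk' _ (fun _ _ h => Finset.disjoint_coe.mpr (hdisj _ _ h)) hne fun i => by
    simpa using hunion.ge (Finset.mem_univ i)

theorem comp_index_mem_blockConstant [AddGroup A] (hS : IndexedPartition S) (c : κ → A) :
    c ∘ hS.index ∈ blockConstant S A := fun _ _ ha _ hb =>
  congrArg c ((hS.mem_iff_index_eq.mp ha).trans (hS.mem_iff_index_eq.mp hb).symm)

theorem comp_some_comp_index_of_mem_blockConstant [AddGroup A] (hS : IndexedPartition S)
    {v : ι → A} (hv : v ∈ blockConstant S A) : (v ∘ hS.some) ∘ hS.index = v :=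
  funext fun i => hv (hS.index i) _ (hS.some_mem _) i (hS.mem_index i)

theorem closure_range_indicator_eq_blockConstant [Finite κ] [∀ j, DecidablePred (· ∈ S j)] {p : ℕ}
    (hS : IndexedPartition S) {w : κ → ι → ZMod p}
    (hw : ∀ j i, w j i = if i ∈ S j then 1 else 0) :
    AddSubgroup.closure (Set.range w) = blockConstant S (ZMod p) := by
  classical
  have := Fintype.ofFinite κ
  refine le_antisymm ?_ fun v hv => ?_
  · rw [AddSubgroup.closure_le, Set.range_subset_iff]
    intro j
    have indicator_eq : Pi.single j 1 ∘ hS.index = w j := by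
      ext i
      simp [hw, Pi.single_apply, hS.mem_iff_index_eq]
    exact indicator_eq ▸ comp_index_mem_blockConstant hS _
  · have expansion : v = ∑ j, v (hS.some j) • w j := by
      conv_lhs => rw [← comp_some_comp_index_of_mem_blockConstant hS hv]
      ext i
      simp [hw, hS.mem_iff_index_eq]
    rw [expansion]
    exact sum_mem fun j _ => ZMod.smul_mem (AddSubgroup.subset_closure (Set.mem_range_self j)) _

theorem exists_eq_and_forall_block_exists_ne (hS : IndexedPartition S) {v : ι → A} {j₀ : κ}
    {a b : ι} (ha : a ∈ S j₀) (hb : b ∈ S j₀) (hab : v a ≠ v b) :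
    ∃ c : κ → A, (∃ i, v i = c (hS.index i)) ∧ ∀ j, ∃ i ∈ S j, v i ≠ c (hS.index i) := by
  classical
  have : Nontrivial A := ⟨_, _, hab⟩
  choose d hd using fun j => exists_ne (v (hS.some j))
  have index_a : hS.index a = j₀ := hS.mem_iff_index_eq.mp ha
  have index_b : hS.index b = j₀ := hS.mem_iff_index_eq.mp hb
  refine ⟨Function.update d j₀ (v a), ⟨a, by simp [index_a]⟩, fun j => ?_⟩
  obtain rfl | hj := eq_or_ne j j₀
  · exact ⟨b, hb, by simpa [index_b] using hab.symm⟩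
  · exact ⟨hS.some j, hS.some_mem j, by simpa [hj] using (hd j).symm⟩

theorem stmt0_general [AddGroup A] (hS : IndexedPartition S) {G : AddSubgroup (ι → A)}
    (hG : blockConstant S A < G) :
    ∃ e : ι → A, e ∈ G ∧ e ∉ blockConstant S A ∧ (∃ i, e i = 0) ∧ ∀ j, ∃ i ∈ S j, e i ≠ 0 := by
  obtain ⟨hle, v, hvG, hv⟩ := SetLike.lt_iff_le_and_exists.mp hG
  obtain ⟨j₀, a, ha, b, hb, hab⟩ : ∃ j, ∃ a ∈ S j, ∃ b ∈ S j, v a ≠ v b := by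
    by_contra! h
    exact hv h
  obtain ⟨c, ⟨i, hi⟩, hc⟩ := exists_eq_and_forall_block_exists_ne hS ha hb hab
  have hcB : c ∘ hS.index ∈ blockConstant S A := comp_index_mem_blockConstant hS c
  refine ⟨v - c ∘ hS.index, sub_mem hvG (hle hcB), fun h => hv ?_, ⟨i, sub_eq_zero.mpr hi⟩,
    fun j => ?_⟩
  · simpa using add_mem h hcB
  · obtain ⟨i, hij, hne⟩ := hc j
    exact ⟨i, hij, sub_ne_zero.mpr hne⟩

end Blocks

/-- **Combinatorial content of Lemma 2 (specialg).**
Let `p : ℕ`, `r, s` positive, and `S 1, …, S s` nonempty pairwise disjoint subsets of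
`{1, …, r}` whose union is everything.  Let `w j ∈ (ℤ/pℤ)^r` be the indicator vector of
`S j`, `W` the additive subgroup generated by the `w j`, and `G'` an additive subgroup
strictly containing `W`.  Then there is `e ∈ G' \ W` with some coordinate `e i = 0` and,
for every `j`, some `i ∈ S j` with `e i ≠ 0`. -/
theorem stmt0 (p r s : ℕ) (hr : 0 < r) (hs : 0 < s)
    (S : Fin s → Finset (Fin r))
    (hne : ∀ j, (S j).Nonempty)
    (hdisj : ∀ j j', j ≠ j' → Disjoint (S j) (S j'))
    (hunion : Finset.univ.biUnion S = Finset.univ)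
    (w : Fin s → (Fin r → ZMod p))
    (hw : ∀ j i, w j i = if i ∈ S j then 1 else 0)
    (W G' : AddSubgroup (Fin r → ZMod p))
    (hW : W = AddSubgroup.closure (Set.range w))
    (hWG : W < G') :
    ∃ e : Fin r → ZMod p, e ∈ G' ∧ e ∉ W ∧
      (∃ i : Fin r, e i = 0) ∧
      (∀ j : Fin s, ∃ i ∈ S j, e i ≠ 0) := by
  have hS := indexedPartitionOfFinsets hne hdisj hunion
  obtain rfl := hW.trans (closure_range_indicator_eq_blockConstant hS hw)
  exact stmt0_general hS hWG
end

section
/- Let R be a unique factorization domain with fraction field K. Let f ∈ R[X] and suppose that in K[X] the image of f factors as f = g·h with g, h ∈ K[X] and g ≠ 0. Then the polynomial h·g′ (where g′ denotes the derivative of g with respect to X), which equals f·g′/g in K(X), has all its coefficients in R; that is, h·g′ is the image of a polynomial in R[X]. -/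
open Polynomial

/-
Over an algebraically closed field, `h * g' = ∑ f / (X - a)`, where `f = g * h` and the sum runs
over the roots `a` of `g` with multiplicity. Each quotient `f / (X - a)` has integral coefficients:
its leading coefficient `c` is that of `f`, and `c * a` is integral because `a` is a root of `f`, so
the leading terms of the quotient can be stripped off one at a time. Other coefficient rings reduce
to this case: if `x` is not integral, some prime ideal avoids the multiplicative set of values of
monic polynomials at `x`, so `x` is still not integral in an algebraic closure of its residue field.
-/

section

attribute [local instance] Polynomial.algebra

universe u

variable {R : Type*} {A : Type u} [CommRing R] [CommRing A] [Algebra R A]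

theorem isIntegral_monomial {c : A} (hc : IsIntegral R c) (n : ℕ) :
    IsIntegral R[X] (monomial n c) :=
  isIntegral_iff_isIntegral_coeff.2 fun k ↦ by
    rw [coeff_monomial]
    split_ifs
    exacts [hc, isIntegral_zero]

theorem isIntegral_map_algHom {B : Type*} [CommRing B] [Algebra R B] (φ : A →ₐ[R] B) {p : A[X]}
    (hp : IsIntegral R[X] p) : IsIntegral R[X] (p.map (φ : A →+* B)) :=
  isIntegral_iff_isIntegral_coeff.2 fun n ↦ by
    rw [coeff_map]
    exact (hp.coeff n).map φ

theorem isIntegral_leadingCoeff_mul_of_isRoot {p : A[X]} (hp : IsIntegral R[X] p) {a : A}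
    (ha : p.IsRoot a) : IsIntegral R (p.leadingCoeff * a) := by
  have hlifts : p ∈ lifts (algebraMap (integralClosure R A) A) :=
    (lifts_iff_coeff_lifts p).2 fun n ↦ ⟨⟨p.coeff n, hp.coeff n⟩, rfl⟩
  obtain ⟨P, rfl⟩ := (mem_lifts _).1 hlifts
  have hroot : aeval a P = 0 := by rwa [← eval_map_algebraMap]
  rw [leadingCoeff_map_of_injective Subtype.val_injective, ← Algebra.smul_def]
  exact isIntegral_trans _ (isIntegral_leadingCoeff_smul P a hroot)

theorem X_sub_C_mul_eraseLead (a : A) (q : A[X]) :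
    (X - C a) * q.eraseLead = (X - C a) * q -
      (monomial (q.natDegree + 1) q.leadingCoeff - monomial q.natDegree (q.leadingCoeff * a)) := by
  rw [← self_sub_monomial_natDegree_leadingCoeff, mul_sub, sub_mul X (C a) (monomial _ _),
    X_mul_monomial, C_mul_monomial, mul_comm a]

theorem isIntegral_of_isIntegral_X_sub_C_mul {a : A} {q : A[X]}
    (hq : IsIntegral R[X] ((X - C a) * q)) : IsIntegral R[X] q := by
  nontriviality A
  induction hn : q.support.card using Nat.strong_induction_on generalizing q with
  | _ n ih =>
    obtain rfl | hq0 := eq_or_ne q 0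
    · exact isIntegral_zero
    have hlead : ((X - C a) * q).leadingCoeff = q.leadingCoeff :=
      leadingCoeff_monic_mul (monic_X_sub_C a)
    have hc : IsIntegral R q.leadingCoeff := hlead ▸ hq.coeff _
    have hca : IsIntegral R (q.leadingCoeff * a) :=
      hlead ▸ isIntegral_leadingCoeff_mul_of_isRoot hq (by simp)
    have herase : IsIntegral R[X] ((X - C a) * q.eraseLead) := by
      rw [X_sub_C_mul_eraseLead]
      exact hq.sub ((isIntegral_monomial hc _).sub (isIntegral_monomial hca _))
    rw [← q.eraseLead_add_monomial_natDegree_leadingCoeff]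
    exact (ih _ (hn ▸ eraseLead_support_card_lt hq0) herase rfl).add (isIntegral_monomial hc _)

theorem isIntegral_mul_derivative_of_splits {g h : A[X]} (hg : g.Splits)
    (hgh : IsIntegral R[X] (g * h)) : IsIntegral R[X] (h * derivative g) := by
  induction hg using Submonoid.closure_induction generalizing h with
  | mem g hg =>
    obtain ⟨a, rfl⟩ | ⟨a, rfl⟩ := hg
    · simp [isIntegral_zero]
    · have hXa : X + C a = X - C (-a) := by rw [C_neg, sub_neg_eq_add]
      rw [derivative_X_add_C, mul_one]
      exact isIntegral_of_isIntegral_X_sub_C_mul (hXa ▸ hgh)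
  | one => simp [isIntegral_zero]
  | mul g₁ g₂ _ _ ih₁ ih₂ =>
    have h₁ : IsIntegral R[X] (g₂ * h * derivative g₁) := ih₁ (by rwa [← mul_assoc])
    have h₂ : IsIntegral R[X] (g₁ * h * derivative g₂) := ih₂ (by rwa [← mul_assoc, mul_comm g₂])
    have leibniz : h * derivative (g₁ * g₂) = g₂ * h * derivative g₁ + g₁ * h * derivative g₂ := by
      rw [derivative_mul]
      ring
    exact leibniz ▸ h₁.add h₂

theorem isIntegral_of_forall_isPrime_quotient {x : A}
    (hx : ∀ P : Ideal A, P.IsPrime → IsIntegral R (Ideal.Quotient.mk P x)) : IsIntegral R x := by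
  let S : Submonoid A :=
    { carrier := {y | ∃ p : R[X], p.Monic ∧ aeval x p = y}
      one_mem' := ⟨1, monic_one, map_one _⟩
      mul_mem' := by
        rintro _ _ ⟨p, hp, rfl⟩ ⟨q, hq, rfl⟩
        exact ⟨p * q, hp.mul hq, map_mul _ _ _⟩ }
  suffices (0 : A) ∈ S from this
  by_contra h0
  obtain ⟨P, hP, -, hPS⟩ := Ideal.exists_le_prime_disjoint ⊥ S (by simpa using h0)
  obtain ⟨p, hp, hpx⟩ := hx P hP
  have hmem : aeval x p ∈ P := by
    rw [← Ideal.Quotient.eq_zero_iff_mem, ← Ideal.Quotient.mkₐ_eq_mk R, ← aeval_algHom_apply]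
    exact hpx
  exact Set.disjoint_left.1 hPS hmem ⟨p, hp, rfl⟩

theorem isIntegral_of_forall_isAlgClosed {x : A}
    (hx : ∀ (L : Type u) [Field L] [IsAlgClosed L] [Algebra R L] (φ : A →ₐ[R] L),
      IsIntegral R (φ x)) : IsIntegral R x := by
  refine isIntegral_of_forall_isPrime_quotient fun P _ ↦ ?_
  let F := FractionRing (A ⧸ P)
  let ι : A ⧸ P →ₐ[R] F := IsScalarTower.toAlgHom R (A ⧸ P) F
  let j : F →ₐ[R] AlgebraicClosure F := IsScalarTower.toAlgHom R F (AlgebraicClosure F)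
  have hinj : Function.Injective (j.comp ι) :=
    (algebraMap F (AlgebraicClosure F)).injective.comp (IsFractionRing.injective (A ⧸ P) F)
  exact (isIntegral_algHom_iff (j.comp ι) hinj).1 <|
    hx (AlgebraicClosure F) ((j.comp ι).comp (Ideal.Quotient.mkₐ R P))

theorem isIntegral_mul_derivative {g h : A[X]} (hgh : IsIntegral R[X] (g * h)) :
    IsIntegral R[X] (h * derivative g) := by
  refine isIntegral_iff_isIntegral_coeff.2 fun n ↦
    isIntegral_of_forall_isAlgClosed fun L _ _ _ φ ↦ ?_
  let φ' : A →+* L := φ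
  have hmap : IsIntegral R[X] (g.map φ' * h.map φ') :=
    Polynomial.map_mul φ' ▸ isIntegral_map_algHom φ hgh
  have hsplit : IsIntegral R[X] ((h * derivative g).map φ') := by
    rw [Polynomial.map_mul, ← derivative_map]
    exact isIntegral_mul_derivative_of_splits (IsAlgClosed.splits _) hmap
  exact coeff_map φ' n ▸ hsplit.coeff n

theorem stmt1_general [IsIntegrallyClosedIn R A] (f : R[X]) (g h : A[X])
    (hfactor : f.map (algebraMap R A) = g * h) :
    ∃ F : R[X], F.map (algebraMap R A) = h * derivative g := by
  have hint : IsIntegral R[X] (h * derivative g) :=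
    isIntegral_mul_derivative (hfactor ▸ isIntegral_algebraMap)
  exact (mem_lifts _).1 <| (lifts_iff_coeff_lifts _).2 fun n ↦
    IsIntegrallyClosedIn.isIntegral_iff.1 (hint.coeff n)

end

/-- **Integrality of Φ (Section 3.1).**
If `R` is a UFD with fraction field `K`, `f ∈ R[X]`, and `f = g·h` in `K[X]` with
`g ≠ 0`, then `h·g′ = f·g′/g` has all its coefficients in `R`, i.e. it is the image
of a polynomial with coefficients in `R`. -/
theorem stmt1 (R K : Type*) [CommRing R] [IsDomain R] [UniqueFactorizationMonoid R]
    [Field K] [Algebra R K] [IsFractionRing R K]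
    (f : R[X]) (g h : K[X]) (hg : g ≠ 0)
    (hfactor : f.map (algebraMap R K) = g * h) :
    ∃ F : R[X], F.map (algebraMap R K) = h * derivative g := by
  have := (isIntegrallyClosed_iff_isIntegrallyClosedIn K (R := R)).1 inferInstance
  exact stmt1_general f g h hfactor
end

section
/- Let k be a field of characteristic p ≥ 0, and let f ∈ k[X] be separable, i.e. f and its derivative f′ are coprime. Write f = c·f_1⋯f_r with c ∈ k nonzero and f_1, …, f_r distinct monic irreducible polynomials in k[X]. Then for any integers e_1, …, e_r and any index i ∈ {1, …, r}, the polynomial f_i divides Σ_{j=1}^r e_j · c · f_j′ · ∏_{l≠j} f_l in k[X] if and only if p divides e_i (where for p = 0 this means e_i = 0). -/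
/-!
Modulo `fᵢ` only the `i`-th term `eᵢ · c · fᵢ′ · ∏_{l ≠ i} f_l` of the sum survives. Separability
makes `fᵢ` coprime to `c · fᵢ′ · ∏_{l ≠ i} f_l`, so `fᵢ` divides the sum exactly when it divides the
constant `eᵢ`, and a nonconstant `fᵢ` does so only when `eᵢ` vanishes in the base ring.
-/

open Polynomial Finset

theorem dvd_sum_mul_prod_erase_iff {R ι : Type*} [CommRing R] [DecidableEq ι] {s : Finset ι}
    {i : ι} (hi : i ∈ s) (a F : ι → R) :
    F i ∣ ∑ j ∈ s, a j * ∏ l ∈ s.erase j, F l ↔ F i ∣ a i * ∏ l ∈ s.erase i, F l := by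
  rw [← add_sum_erase s _ hi]
  refine dvd_add_left (dvd_sum fun j hj => Dvd.dvd.mul_left ?_ _)
  exact dvd_prod_of_mem F (mem_erase.2 ⟨(ne_of_mem_erase hj).symm, hi⟩)

section CommRing

variable {R ι : Type*} [CommRing R] [DecidableEq ι] {s : Finset ι} {i : ι} {c : R} {F : ι → R[X]}

theorem isCoprime_derivative_mul_prod_erase (hsep : (C c * ∏ j ∈ s, F j).Separable) (hi : i ∈ s) :
    IsCoprime (F i) (C c * derivative (F i) * ∏ l ∈ s.erase i, F l) := by
  have hc : IsUnit (C c) := isUnit_C.2 ((separable_C c).1 hsep.of_mul_left)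
  have hprod : (F i * ∏ l ∈ s.erase i, F l).Separable :=
    (mul_prod_erase s F hi).symm ▸ hsep.of_mul_right
  have hderiv : IsCoprime (F i) (derivative (F i)) := hprod.of_mul_left
  exact ((isCoprime_mul_unit_left_right hc _ _).2 hderiv).mul_right hprod.isCoprime

theorem dvd_sum_mul_derivative_mul_prod_erase_iff (hsep : (C c * ∏ j ∈ s, F j).Separable)
    (hi : i ∈ s) (a : ι → R[X]) :
    F i ∣ ∑ j ∈ s, a j * (C c * derivative (F j) * ∏ l ∈ s.erase j, F l) ↔ F i ∣ a i := by
  simp_rw [← mul_assoc (a _) (C c * derivative (F _))]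
  rw [dvd_sum_mul_prod_erase_iff hi, mul_assoc]
  exact ⟨(isCoprime_derivative_mul_prod_erase hsep hi).dvd_of_dvd_mul_right,
    fun h => h.mul_right _⟩

theorem dvd_C_iff_of_natDegree_pos {P : R[X]} (hlead : P.leadingCoeff ∈ nonZeroDivisors R)
    (hdeg : 0 < P.natDegree) (a : R) : P ∣ C a ↔ a = 0 := by
  refine ⟨?_, fun ha => by simp [ha]⟩
  rintro ⟨Q, hPQ⟩
  by_contra ha
  have hQ : Q ≠ 0 := by
    rintro rfl
    exact ha (by simpa using hPQ)
  have hmul : P.leadingCoeff * Q.leadingCoeff ≠ 0 := fun h =>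
    hQ (leadingCoeff_eq_zero.1 ((mul_left_mem_nonZeroDivisors_eq_zero_iff hlead).1 h))
  have hnat : 0 = P.natDegree + Q.natDegree := by
    rw [← natDegree_mul' hmul, ← hPQ, natDegree_C]
  lia

theorem stmt2_general (p : ℕ) [CharP R p] (hsep : (C c * ∏ j ∈ s, F j).Separable) (hi : i ∈ s)
    (hlead : (F i).leadingCoeff ∈ nonZeroDivisors R) (hdeg : 0 < (F i).natDegree) (e : ι → ℤ) :
    F i ∣ ∑ j ∈ s, e j • (C c * derivative (F j) * ∏ l ∈ s.erase j, F l) ↔ (p : ℤ) ∣ e i := by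
  simp_rw [zsmul_eq_mul]
  rw [dvd_sum_mul_derivative_mul_prod_erase_iff hsep hi fun j => (e j : R[X]), ← C_eq_intCast,
    dvd_C_iff_of_natDegree_pos hlead hdeg, CharP.intCast_eq_zero_iff R p]

end CommRing

/-- **Divisibility criterion (key step of Lemma 2).**
Let `k` be a field of characteristic `p ≥ 0` and `f = c·f₁⋯f_r ∈ k[X]` separable
(coprime to its derivative), with the `f_j` distinct monic irreducibles.  For integers
`e₁, …, e_r` and an index `i`, the local factor `f i` divides
`Σ_j e_j · c · f_j′ · ∏_{l ≠ j} f_l` if and only if `p ∣ e_i`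
(for `p = 0` this means `e_i = 0`). -/
theorem stmt2 (k : Type*) [Field k] (p : ℕ) [CharP k p]
    (r : ℕ) (c : k) (hc : c ≠ 0) (F : Fin r → k[X])
    (hmonic : ∀ j, (F j).Monic) (hirr : ∀ j, Irreducible (F j))
    (hdist : Function.Injective F)
    (f : k[X]) (hf : f = C c * ∏ j, F j)
    (hsep : IsCoprime f (derivative f))
    (e : Fin r → ℤ) (i : Fin r) :
    F i ∣ (∑ j, e j • (C c * derivative (F j) * ∏ l ∈ univ.erase j, F l)) ↔
      (p : ℤ) ∣ e i := by
  have hlead := mem_nonZeroDivisors_of_ne_zero (leadingCoeff_ne_zero.2 (hirr i).ne_zero)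
  exact stmt2_general p (hf ▸ hsep) (mem_univ i) hlead (hirr i).natDegree_pos e
end

section
/- Let k be a field and let f be a nonzero polynomial in k[t][X] (polynomials in X whose coefficients are polynomials in t). Suppose f = g·h with g, h ∈ k[t][X] and g ≠ 0. Write h·g′ = Σ_{i=0}^{n−1} a_i(t) X^i, where g′ is the derivative of g with respect to X. Then deg_t(a_i) ≤ deg_t(f) for every i, where deg_t(F) denotes the maximum of the t-degrees of the X-coefficients of F ∈ k[t][X]. -/
open Polynomial

/-- For `F ∈ k[t][X]` (a polynomial in `X` with coefficients in `k[t]`), `degT F`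
is the maximum of the `t`-degrees of the `X`-coefficients of `F`. -/
noncomputable def degT {k : Type*} [Field k] (F : Polynomial (Polynomial k)) : ℕ :=
  F.support.sup fun i => (F.coeff i).natDegree

/-!
Exchanging `t` and `X` turns the `t`-degree of `F ∈ R[t][X]` into the degree of a polynomial over
`R[X]`. Over a coefficient ring without zero divisors this degree is additive on products, and the
derivative with respect to `X` acts on each `t`-coefficient, so it cannot raise it. Hence `h·g′`
has `t`-degree at most that of `g·h`.
-/

section InnerDegree

variable {R : Type*} [Semiring R]

/-- The `t`-degree of `F ∈ R[t][X]`, extending `degT` to an arbitrary coefficient semiring; it is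
`0` for `F = 0`. -/
noncomputable def innerDegree (F : R[X][X]) : ℕ :=
  F.support.sup fun i => (F.coeff i).natDegree

theorem innerDegree_le_iff {F : R[X][X]} {d : ℕ} :
    innerDegree F ≤ d ↔ ∀ i, (F.coeff i).natDegree ≤ d := by
  refine Finset.sup_le_iff.trans ⟨fun hd i => ?_, fun hd i _ => hd i⟩
  by_cases hi : F.coeff i = 0
  · simp [hi]
  · exact hd i (mem_support_iff.mpr hi)

end InnerDegree

section Swap

variable {R : Type*} [CommSemiring R]

theorem coeff_coeff_swap (F : R[X][X]) (i j : ℕ) :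
    ((Bivariate.swap F).coeff j).coeff i = (F.coeff i).coeff j := by
  induction F using Polynomial.induction_on' with
  | add F G hF hG => simp only [map_add, coeff_add, hF, hG]
  | monomial n p =>
    induction p using Polynomial.induction_on' with
    | add p q hp hq => simp only [map_add, coeff_add, hp, hq]
    | monomial m r =>
      rw [Bivariate.swap_monomial_monomial]
      simp only [coeff_monomial, apply_ite (coeff · i), apply_ite (coeff · j), coeff_zero]
      split_ifs <;> rfl

theorem innerDegree_eq_natDegree_swap (F : R[X][X]) :
    innerDegree F = (Bivariate.swap F).natDegree := by
  refine eq_of_forall_ge_iff fun d => ?_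
  simp only [innerDegree_le_iff, natDegree_le_iff_coeff_eq_zero, Polynomial.ext_iff,
    coeff_coeff_swap, coeff_zero]
  exact ⟨fun hd j hj i => hd i j hj, fun hd i j hj => hd j hj i⟩

theorem coeff_swap_derivative (F : R[X][X]) (j : ℕ) :
    (Bivariate.swap (derivative F)).coeff j = derivative ((Bivariate.swap F).coeff j) := by
  ext i
  simp only [coeff_coeff_swap, coeff_derivative, ← Nat.cast_succ, coeff_mul_natCast]

theorem degree_swap_derivative_le (F : R[X][X]) :
    (Bivariate.swap (derivative F)).degree ≤ (Bivariate.swap F).degree := by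
  refine degree_mono fun j hj => ?_
  rw [mem_support_iff, coeff_swap_derivative] at hj
  exact mem_support_iff.mpr (ne_zero_of_map hj)

theorem innerDegree_mul_derivative_le [NoZeroDivisors R] (g h : R[X][X]) :
    innerDegree (h * derivative g) ≤ innerDegree (g * h) := by
  simp only [innerDegree_eq_natDegree_swap]
  refine natDegree_le_natDegree ?_
  calc (Bivariate.swap (h * derivative g)).degree
      = (Bivariate.swap h).degree + (Bivariate.swap (derivative g)).degree := by
        rw [map_mul, degree_mul]
    _ ≤ (Bivariate.swap h).degree + (Bivariate.swap g).degree := by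
        gcongr
        exact degree_swap_derivative_le g
    _ = (Bivariate.swap (g * h)).degree := by rw [map_mul, degree_mul, add_comm]

end Swap

theorem stmt8_general {R : Type*} [CommSemiring R] [NoZeroDivisors R] {f g h : R[X][X]}
    (hfactor : f = g * h) (i : ℕ) :
    ((h * derivative g).coeff i).natDegree ≤ innerDegree f := by
  subst hfactor
  exact innerDegree_le_iff.mp (innerDegree_mul_derivative_le g h) i

/-- **Lemma 8 (logboundp).**
Let `f` be a nonzero polynomial in `k[t][X]` and `f = g·h` with `g ≠ 0`.
Writing `h·g′ = Σ a_i(t) X^i` (derivative with respect to `X`), one has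
`deg_t(a_i) ≤ deg_t(f)` for every `i`. -/
theorem stmt8 (k : Type*) [Field k] (f g h : Polynomial (Polynomial k))
    (hf : f ≠ 0) (hg : g ≠ 0) (hfactor : f = g * h) :
    ∀ i : ℕ, ((h * derivative g).coeff i).natDegree ≤ degT f :=
  stmt8_general hfactor
end

section
/- Let k be a field and let f, g, h ∈ k[x, y] be nonzero polynomials with f = g·h and ∂g/∂y ≠ 0. Then every exponent vector of h·(∂g/∂y) lies in N(f) + (0, −1); that is, for every pair (a, b) such that the coefficient of x^a y^b in h·(∂g/∂y) is nonzero, the point (a, b+1) lies in the Newton polygon N(f) ⊂ ℝ². -/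
open MvPolynomial

/-- The Newton polygon of a bivariate polynomial `F ∈ k[x, y]`: the convex hull in `ℝ²`
of the exponent vectors `(i, j)` of the monomials `x^i y^j` occurring in `F`. -/
noncomputable def newtonPolygon {k : Type*} [Field k] (F : MvPolynomial (Fin 2) k) :
    Set (ℝ × ℝ) :=
  convexHull ℝ {q : ℝ × ℝ | ∃ m ∈ F.support, q = ((m 0 : ℝ), (m 1 : ℝ))}

/-!
Newton polytopes are multiplicative (Ostrowski): a vertex of `N(p) + N(q)` is in exactly one way a
sum of an exponent vector of `p` and one of `q`, so the corresponding coefficient of `p * q` is a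
single product of nonzero coefficients, and by Krein–Milman the vertices span the whole sum.
Differentiating with respect to `xᵢ` lowers exponent vectors by `eᵢ`, so `N(∂ᵢg) + eᵢ ⊆ N(g)`;
adding `N(h)` on both sides gives `N(h * ∂ᵢg) + eᵢ ⊆ N(g * h)`.
-/

open scoped Pointwise

theorem eq_and_eq_of_add_eq_add_of_mem_extremePoints {𝕜 E : Type*} [Field 𝕜] [LinearOrder 𝕜]
    [IsStrictOrderedRing 𝕜] [AddCommGroup E] [Module 𝕜 E] {s t : Set E} {a a' b b' : E}
    (ha : a ∈ s) (ha' : a' ∈ s) (hb : b ∈ t) (hb' : b' ∈ t)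
    (hext : a + b ∈ (s + t).extremePoints 𝕜) (hab : a' + b' = a + b) : a' = a ∧ b' = b := by
  -- The extreme point `a + b` is the midpoint of the exchanged sums `a + b'` and `a' + b`.
  have hmid : a + b ∈ openSegment 𝕜 (a + b') (a' + b) := by
    refine ⟨1 / 2, 1 / 2, by positivity, by positivity, add_halves 1, ?_⟩
    calc (1 / 2 : 𝕜) • (a + b') + (1 / 2 : 𝕜) • (a' + b)
        = (1 / 2 : 𝕜) • ((a + b) + (a' + b')) := by module
      _ = a + b := by rw [hab]; module
  obtain ⟨hb'b, ha'a⟩ := (mem_extremePoints.1 hext).2 _ (Set.add_mem_add ha hb') _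
    (Set.add_mem_add ha' hb) hmid
  exact ⟨add_right_cancel ha'a, add_left_cancel hb'b⟩

theorem convexHull_extremePoints_convexHull_of_finite {E : Type*} [AddCommGroup E] [Module ℝ E]
    [TopologicalSpace E] [T2Space E] [IsTopologicalAddGroup E] [ContinuousSMul ℝ E]
    [LocallyConvexSpace ℝ E] {s : Set E} (hs : s.Finite) :
    convexHull ℝ ((convexHull ℝ s).extremePoints ℝ) = convexHull ℝ s := by
  have hclosed : IsClosed (convexHull ℝ ((convexHull ℝ s).extremePoints ℝ)) :=
    (hs.subset extremePoints_convexHull_subset).isClosed_convexHull ℝ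
  rw [← hclosed.closure_eq]
  exact closure_convexHull_extremePoints (hs.isCompact_convexHull ℝ) (convex_convexHull ℝ s)

section NewtonPolytope

variable {σ R : Type*}

/-- The exponent vector of a monomial, viewed as a point of the real space `σ → ℝ` that contains
the Newton polytope. -/
noncomputable def exponentVector : (σ →₀ ℕ) →+ (σ → ℝ) :=
  ((Nat.castAddMonoidHom ℝ).compLeft σ).comp Finsupp.coeFnAddHom

@[simp]
theorem exponentVector_apply (m : σ →₀ ℕ) (i : σ) : exponentVector m i = m i := rfl

theorem exponentVector_injective : Function.Injective (exponentVector (σ := σ)) :=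
  fun _ _ h ↦ Finsupp.ext fun i ↦ Nat.cast_injective (congrFun h i)

theorem exponentVector_single_one [DecidableEq σ] (i : σ) :
    exponentVector (Finsupp.single i 1) = Pi.single i 1 := by
  ext j
  simp [Finsupp.single_apply, Pi.single_apply, eq_comm]

variable [CommSemiring R]

/-- The Newton polytope of a polynomial in arbitrarily many variables: the convex hull of its
exponent vectors. It is empty for the zero polynomial. -/
noncomputable def newtonPolytope (p : MvPolynomial σ R) : Set (σ → ℝ) :=
  convexHull ℝ (exponentVector '' p.support)

theorem exponentVector_mem_newtonPolytope {p : MvPolynomial σ R} {m : σ →₀ ℕ}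
    (hm : m ∈ p.support) : exponentVector m ∈ newtonPolytope p :=
  subset_convexHull ℝ _ (Set.mem_image_of_mem _ hm)

theorem newtonPolytope_mul_subset (p q : MvPolynomial σ R) :
    newtonPolytope (p * q) ⊆ newtonPolytope p + newtonPolytope q := by
  classical
  have hsupp : ((p * q).support : Set (σ →₀ ℕ)) ⊆ p.support + q.support :=
    mod_cast support_mul p q
  rw [newtonPolytope, newtonPolytope, newtonPolytope, ← convexHull_add, ← Set.image_add]
  exact convexHull_mono (Set.image_mono hsupp)

theorem mem_image_support_mul_of_mem_extremePoints [NoZeroDivisors R] {p q : MvPolynomial σ R}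
    {v : σ → ℝ} (hv : v ∈ (exponentVector '' p.support + exponentVector '' q.support :
      Set (σ → ℝ)).extremePoints ℝ) :
    v ∈ exponentVector '' (p * q).support := by
  obtain ⟨_, ⟨m, hm, rfl⟩, _, ⟨n, hn, rfl⟩, rfl⟩ := extremePoints_subset hv
  have hunique : UniqueAdd p.support q.support m n := by
    intro m' n' hm' hn' heq
    obtain ⟨hmm', hnn'⟩ := eq_and_eq_of_add_eq_add_of_mem_extremePoints
      (Set.mem_image_of_mem _ hm) (Set.mem_image_of_mem _ hm')
      (Set.mem_image_of_mem _ hn) (Set.mem_image_of_mem _ hn') hv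
      (by rw [← map_add, heq, map_add])
    exact ⟨exponentVector_injective hmm', exponentVector_injective hnn'⟩
  have hcoeff : coeff (m + n) (p * q) = coeff m p * coeff n q :=
    AddMonoidAlgebra.coeff_mul_add_of_uniqueAdd hunique
  refine ⟨m + n, mem_support_iff.2 ?_, map_add _ m n⟩
  rw [hcoeff]
  exact mul_ne_zero (mem_support_iff.1 hm) (mem_support_iff.1 hn)

theorem newtonPolytope_mul [NoZeroDivisors R] (p q : MvPolynomial σ R) :
    newtonPolytope (p * q) = newtonPolytope p + newtonPolytope q := by
  refine (newtonPolytope_mul_subset p q).antisymm ?_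
  let S : Set (σ → ℝ) := exponentVector '' p.support + exponentVector '' q.support
  have hfin : S.Finite :=
    (p.support.finite_toSet.image _).add (q.support.finite_toSet.image _)
  have hvertex : (convexHull ℝ S).extremePoints ℝ ⊆ exponentVector '' (p * q).support :=
    fun v hv ↦ mem_image_support_mul_of_mem_extremePoints
      (inter_extremePoints_subset_extremePoints_of_subset (subset_convexHull ℝ S)
        ⟨extremePoints_convexHull_subset hv, hv⟩)
  calc newtonPolytope p + newtonPolytope q
      = convexHull ℝ S := (convexHull_add _ _).symm
    _ = convexHull ℝ ((convexHull ℝ S).extremePoints ℝ) :=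
        (convexHull_extremePoints_convexHull_of_finite hfin).symm
    _ ⊆ newtonPolytope (p * q) := convexHull_mono hvertex

theorem add_single_mem_support_of_mem_support_pderiv {i : σ} {p : MvPolynomial σ R}
    {m : σ →₀ ℕ} (hm : m ∈ (pderiv i p).support) : m + Finsupp.single i 1 ∈ p.support := by
  rw [mem_support_iff, coeff_pderiv] at hm
  exact mem_support_iff.2 (left_ne_zero_of_mul hm)

theorem newtonPolytope_pderiv_add_single_subset [DecidableEq σ] (i : σ) (p : MvPolynomial σ R) :
    newtonPolytope (pderiv i p) + {Pi.single i 1} ⊆ newtonPolytope p := by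
  rw [newtonPolytope, ← convexHull_singleton (𝕜 := ℝ) (Pi.single i 1), ← convexHull_add]
  refine convexHull_mono ?_
  rintro _ ⟨_, ⟨m, hm, rfl⟩, _, rfl, rfl⟩
  refine ⟨_, add_single_mem_support_of_mem_support_pderiv hm, ?_⟩
  rw [map_add, exponentVector_single_one]

theorem stmt12_general [NoZeroDivisors R] [DecidableEq σ] (i : σ) (g h : MvPolynomial σ R) :
    newtonPolytope (h * pderiv i g) + {Pi.single i 1} ⊆ newtonPolytope (g * h) :=
  calc newtonPolytope (h * pderiv i g) + {Pi.single i 1}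
      ⊆ newtonPolytope h + newtonPolytope (pderiv i g) + {Pi.single i 1} :=
        Set.add_subset_add_right (newtonPolytope_mul_subset h (pderiv i g))
    _ = newtonPolytope h + (newtonPolytope (pderiv i g) + {Pi.single i 1}) := add_assoc _ _ _
    _ ⊆ newtonPolytope h + newtonPolytope g :=
        Set.add_subset_add_left (newtonPolytope_pderiv_add_single_subset i g)
    _ = newtonPolytope (g * h) := by rw [newtonPolytope_mul, add_comm]

end NewtonPolytope

theorem newtonPolygon_eq_image_newtonPolytope {k : Type*} [Field k] (F : MvPolynomial (Fin 2) k) :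
    newtonPolygon F = LinearEquiv.finTwoArrow ℝ ℝ '' newtonPolytope F := by
  have hexponents : {q : ℝ × ℝ | ∃ m ∈ F.support, q = ((m 0 : ℝ), (m 1 : ℝ))} =
      LinearEquiv.finTwoArrow ℝ ℝ '' (exponentVector '' F.support) := by
    ext q
    simp [eq_comm]
  rw [newtonPolygon, hexponents]
  exact ((LinearEquiv.finTwoArrow ℝ ℝ).toLinearMap.image_convexHull _).symm

/-- **The final Lemma of the paper (Newton-polygon bound for Φ(g)).**
Let `k` be a field and `f = g·h` nonzero in `k[x, y]` with `∂g/∂y ≠ 0`.  Then every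
exponent vector `(a, b)` of `h·(∂g/∂y)` satisfies `(a, b+1) ∈ N(f)`; that is, the
exponent vectors of `h·∂_y g` lie in `N(f) + {(0, −1)}`. -/
theorem stmt12 (k : Type*) [Field k] (f g h : MvPolynomial (Fin 2) k)
    (hf : f ≠ 0) (hg : g ≠ 0) (hh : h ≠ 0)
    (hfactor : f = g * h) (hdg : pderiv 1 g ≠ 0) :
    ∀ a b : ℕ,
      MvPolynomial.coeff (Finsupp.single 0 a + Finsupp.single 1 b) (h * pderiv 1 g) ≠ 0 →
        ((a : ℝ), (b : ℝ) + 1) ∈ newtonPolygon f := by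
  intro a b hab
  rw [hfactor, newtonPolygon_eq_image_newtonPolytope]
  exact ⟨_, stmt12_general 1 g h (Set.add_mem_add
    (exponentVector_mem_newtonPolytope (mem_support_iff.2 hab)) rfl), by simp⟩
end
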